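/- Fix m ≥ 1 and n ≥ 2 and work on W := V^{⊗(m+n)}, regarding the first m factors as the module M = V^{⊗m}. Define T_i := c_{m+i} for 1 ≤ i ≤ n−1, T_n := J applied in the last tensor factor, P_1 := T_1T_2⋯T_{n−1}·T_n·T_{n−1}⋯T_2T_1, D := (c_m∘c_{m−1}∘⋯∘c_1)∘(c_1∘c_2∘⋯∘c_m) (the double braiding of M past the (m+1)-st factor, acting in the first m+1 factors of W), and T_0 := P_1⁻¹ ∘ D⁻¹. Then T_0, T_1, …, T_n satisfy the defining relations of the affine braid group of type C∨C_n: T_iT_j = T_jT_i for |i−j| ≥ 2 (including T_0T_i = T_iT_0 for 2 ≤ i ≤ n), T_iT_{i+1}T_i = T_{i+1}T_iT_{i+1} for 1 ≤ i ≤ n−2, T_0T_1T_0T_1 = T_1T_0T_1T_0, and T_{n−1}T_nT_{n−1}T_n = T_nT_{n−1}T_nT_{n−1}; hence they define a representation of the affine braid group of type C∨C_n on W. -/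

import Mathlib

/-!
The relations among `T_1, …, T_n` are the braid relation and the reflection equation tensored with
identities.  They exhibit `T_1, …, T_n` as a family of type `B_n`, with `T_n` the special generator,
and the statement follows from two facts about such a family.

First, conjugation by a braid neighbour propagates the relation `dsds = sdsd`: if moreover
`sts = tst` and `dt = td`, then `(sds)t(sds)t = t(sds)t(sds)`.  Starting from `1` this gives the
four-term relation between `D` and `T_1`; starting from `T_n` it gives the one between `P_2` and
`T_1`, where `P_1 = T_1 P_2 T_1`.

Second, write `T_0⁻¹ = D T_1 P_2 T_1 = y T_1` with `y = D T_1 P_2`.  Then `T_1 T_0 = y⁻¹` and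
`T_0 T_1 = T_1⁻¹ y⁻¹ T_1`, so the four-term relation between `T_0` and `T_1` says that `T_1`
commutes with `y²`.  This follows from the two relations above because `D` and `P_2` commute.
-/

open TensorProduct

/-- The iterated tensor power `V^{⊗n}` (with an extra harmless factor `K` at the end):
`TPow K V 0 = K` and `TPow K V (n+1) = V ⊗ TPow K V n`. -/
noncomputable def TPow (K : Type) [Field K] (V : Type) [AddCommGroup V] [Module K V] :
    ℕ → ModuleCat K
  | 0 => ModuleCat.of K K
  | n + 1 => ModuleCat.of K (TensorProduct K V (TPow K V n))

variable {K : Type} [Field K] {V : Type} [AddCommGroup V] [Module K V]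

/-- The operator `c_{i+1}`: an endomorphism `c` of `V ⊗ V` applied in the (0-based) tensor
factors `i, i+1` of `V^{⊗n}`, identity elsewhere (and identity if out of range). -/
noncomputable def opAt (c : Module.End K (TensorProduct K V V)) :
    (i n : ℕ) → Module.End K ↥(TPow K V n)
  | 0, n + 2 =>
      (show Module.End K (TensorProduct K V (TensorProduct K V ↥(TPow K V n))) from
        (TensorProduct.assoc K V V ↥(TPow K V n)).conj
          (LinearMap.rTensor ↥(TPow K V n) c))
  | i + 1, n + 1 => LinearMap.lTensor V (opAt c i n)
  | _, _ => LinearMap.id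

/-- The operator `id^{⊗(n−1)} ⊗ J`: an endomorphism `J` of `V` applied in the last tensor
factor of `V^{⊗n}`. -/
noncomputable def opLast (J : Module.End K V) : (n : ℕ) → Module.End K ↥(TPow K V n)
  | 0 => LinearMap.id
  | 1 => LinearMap.rTensor ↥(TPow K V 0) J
  | n + 2 => LinearMap.lTensor V (opLast J (n + 1))

/-- `T_{(i⋯j)}` for a family of elements of a monoid. -/
def Tseg {G : Type*} [Monoid G] (t : ℕ → G) (i j : ℕ) : G :=
  if i ≤ j then ((List.range (j - i)).map fun k => t (i + k)).prod
  else ((List.range (i - j)).map fun k => t (i - 1 - k)).prod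

/-- `P_i := T_{(i⋯n)} T_n T_{(n⋯i)}`. -/
def Pel {G : Type*} [Monoid G] (t : ℕ → G) (n i : ℕ) : G :=
  Tseg t i n * t n * Tseg t n i

/-- On `W := V^{⊗(m+n)}` (the first `m` factors being the module `M = V^{⊗m}`):
`T_i := c_{m+i}` for `1 ≤ i ≤ n−1` and `T_n := J` applied in the last tensor factor. -/
noncomputable def Tb (c : Module.End K (TensorProduct K V V)) (J : Module.End K V)
    (m n : ℕ) (i : ℕ) : Module.End K ↥(TPow K V (m + n)) :=
  if i = n then opLast J (m + n) else opAt c (m + i - 1) (m + n)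

/-- `D := (c_m ∘ ⋯ ∘ c_1) ∘ (c_1 ∘ ⋯ ∘ c_m)`, the double braiding of `M = V^{⊗m}` past the
`(m+1)`-st factor, acting in the first `m+1` factors of `V^{⊗(m+n)}`. -/
noncomputable def Dop (c : Module.End K (TensorProduct K V V)) (m n : ℕ) :
    Module.End K ↥(TPow K V (m + n)) :=
  ((List.range m).map fun k => opAt c (m - 1 - k) (m + n)).prod
    * ((List.range m).map fun k => opAt c k (m + n)).prod

/-- The operators `T_0, T_1, …, T_n` on `W = V^{⊗(m+n)}`, where
`T_0 := P_1⁻¹ ∘ D⁻¹ = (D ∘ P_1)⁻¹` (realized via `Ring.inverse`). -/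
noncomputable def Taff (c : Module.End K (TensorProduct K V V)) (J : Module.End K V)
    (m n : ℕ) (i : ℕ) : Module.End K ↥(TPow K V (m + n)) :=
  if i = 0 then Ring.inverse (Dop c m n * Pel (Tb c J m n) n 1) else Tb c J m n i

/-! ### Braid relations in a monoid -/

section Monoid

variable {M : Type*} [Monoid M]

/-- The braid relation of length three. -/
def BraidRel (a b : M) : Prop := a * b * a = b * a * b

/-- The braid relation of length four, which is also the shape of the reflection equation. -/
def FourTermRel (a b : M) : Prop := a * b * a * b = b * a * b * a

theorem BraidRel.symm {a b : M} (h : BraidRel a b) : BraidRel b a := Eq.symm h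

theorem FourTermRel.symm {a b : M} (h : FourTermRel a b) : FourTermRel b a := Eq.symm h

theorem BraidRel.map {N F : Type*} [Monoid N] [FunLike F M N] [MonoidHomClass F M N] {a b : M}
    (h : BraidRel a b) (f : F) : BraidRel (f a) (f b) := by
  simpa only [BraidRel, map_mul] using congrArg f h

theorem FourTermRel.map {N F : Type*} [Monoid N] [FunLike F M N] [MonoidHomClass F M N] {a b : M}
    (h : FourTermRel a b) (f : F) : FourTermRel (f a) (f b) := by
  simpa only [FourTermRel, map_mul] using congrArg f h

theorem FourTermRel.conj {d s t : M} (hds : FourTermRel d s) (hst : BraidRel s t)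
    (hdt : Commute d t) : FourTermRel (s * d * s) t := by
  unfold FourTermRel BraidRel at *
  calc s * d * s * t * (s * d * s) * t
      = s * d * (s * t * s) * d * s * t := by simp only [mul_assoc]
    _ = s * t * d * s * d * (t * s * t) := by rw [hst]; simp only [hdt.left_comm, mul_assoc]
    _ = s * t * (d * s * d * s) * t * s := by rw [← hst]; simp only [mul_assoc]
    _ = s * t * s * d * s * t * d * s := by rw [hds]; simp only [hdt.left_comm, mul_assoc]
    _ = t * s * d * (t * s * t) * d * s := by rw [hst]; simp only [hdt.left_comm, mul_assoc]
    _ = t * (s * d * s) * t * (s * d * s) := by rw [← hst]; simp only [mul_assoc]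

theorem FourTermRel.commute_conj {s t : M} (h : FourTermRel s t) : Commute t (s * t * s) := by
  simpa only [FourTermRel, Commute, SemiconjBy, mul_assoc] using h.symm

theorem BraidRel.commute_conj_conj {p s t : M} (hst : BraidRel s t) (hps : Commute p s) :
    Commute t (s * (t * p * t) * s) := by
  unfold BraidRel at hst
  calc t * (s * (t * p * t) * s) = t * s * t * p * t * s := by simp only [mul_assoc]
    _ = s * t * (s * p) * t * s := by rw [← hst]; simp only [mul_assoc]
    _ = s * t * p * (s * t * s) := by rw [← hps.eq]; simp only [mul_assoc]
    _ = s * (t * p * t) * s * t := by rw [hst]; simp only [mul_assoc]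

theorem FourTermRel.commute_sq {d p t : M} (hdt : FourTermRel d t) (hpt : FourTermRel p t)
    (hdp : Commute d p) : Commute t ((d * t * p) ^ 2) := by
  unfold FourTermRel at hdt hpt
  rw [sq]
  calc t * (d * t * p * (d * t * p)) = t * d * t * (p * d) * t * p := by simp only [mul_assoc]
    _ = (t * d * t * d) * p * t * p := by rw [← hdp.eq]; simp only [mul_assoc]
    _ = d * t * d * (t * p * t * p) := by rw [← hdt]; simp only [mul_assoc]
    _ = d * t * (d * p) * t * p * t := by rw [← hpt]; simp only [mul_assoc]
    _ = d * t * p * (d * t * p) * t := by rw [hdp.eq]; simp only [mul_assoc]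

/-! ### Jucys–Murphy elements -/

/-- The Jucys–Murphy element `a_{k-1} ⋯ a_1 a_0 a_0 a_1 ⋯ a_{k-1}` of a family of elements; for
`a_i = c_{i+1}` it is the double braiding of `k` strands past the next one. -/
def jucysMurphy (a : ℕ → M) (k : ℕ) : M :=
  ((List.range k).map fun i => a (k - 1 - i)).prod * ((List.range k).map a).prod

theorem jucysMurphy_succ (a : ℕ → M) (k : ℕ) :
    jucysMurphy a (k + 1) = a k * jucysMurphy a k * a k := by
  have descending : ((List.range (k + 1)).map fun i => a (k + 1 - 1 - i)).prod
      = a k * ((List.range k).map fun i => a (k - 1 - i)).prod := by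
    simp [List.range_succ_eq_map, Function.comp_def, Nat.sub_sub, Nat.add_comm]
  rw [jucysMurphy, descending, List.range_succ, List.map_append, List.prod_append, jucysMurphy]
  simp only [List.map_cons, List.map_nil, List.prod_singleton, mul_assoc]

theorem jucysMurphy_mem {S : Submonoid M} {a : ℕ → M} {k : ℕ} (h : ∀ i < k, a i ∈ S) :
    jucysMurphy a k ∈ S := by
  refine mul_mem (list_prod_mem ?_) (list_prod_mem ?_) <;>
    simp only [List.forall_mem_map, List.mem_range] <;> intro i hi <;> exact h _ (by omega)

theorem commute_jucysMurphy {a : ℕ → M} {g : M} {k : ℕ} (h : ∀ i < k, Commute g (a i)) :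
    Commute g (jucysMurphy a k) :=
  jucysMurphy_mem (S := Submonoid.centralizer {g}) (fun i hi _ hg => hg ▸ h i hi) g rfl

theorem fourTermRel_jucysMurphy {a : ℕ → M} {k : ℕ}
    (hcomm : ∀ i j, i + 2 ≤ j → j ≤ k → Commute (a i) (a j))
    (hbraid : ∀ i < k, BraidRel (a i) (a (i + 1))) : FourTermRel (jucysMurphy a k) (a k) := by
  induction k with
  | zero => simp [FourTermRel, jucysMurphy]
  | succ k ih =>
    rw [jucysMurphy_succ]
    exact (ih (fun i j hij hj => hcomm i j hij (by omega)) fun i hi => hbraid i (by omega)).conj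
      (hbraid k k.lt_succ_self)
      (commute_jucysMurphy fun i hi => (hcomm i (k + 1) (by omega) le_rfl).symm).symm

/-! ### The elements `P_i` -/

theorem Tseg_of_ge (t : ℕ → M) {i j : ℕ} (h : j ≤ i) :
    Tseg t i j = ((List.range (i - j)).map fun k => t (i - 1 - k)).prod := by
  obtain rfl | hlt := h.eq_or_lt
  · simp [Tseg]
  · exact if_neg hlt.not_ge

theorem Tseg_mem {S : Submonoid M} {t : ℕ → M} {i j : ℕ}
    (h : ∀ k, min i j ≤ k → k < max i j → t k ∈ S) : Tseg t i j ∈ S := by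
  unfold Tseg
  split_ifs <;> refine list_prod_mem ?_ <;>
    simp only [List.forall_mem_map, List.mem_range] <;> intro k hk <;>
    exact h _ (by omega) (by omega)

theorem Tseg_eq_mul (t : ℕ → M) {i n : ℕ} (h : i < n) :
    Tseg t i n = t i * Tseg t (i + 1) n := by
  rw [Tseg, Tseg, if_pos h.le, if_pos (show i + 1 ≤ n from h),
    show n - i = n - (i + 1) + 1 by omega, List.range_succ_eq_map]
  simp [Function.comp_def, Nat.add_assoc, Nat.add_comm 1]

theorem Tseg_eq_mul_of_gt (t : ℕ → M) {i n : ℕ} (h : i < n) :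
    Tseg t n i = Tseg t n (i + 1) * t i := by
  rw [Tseg_of_ge t h.le, Tseg_of_ge t h, show n - i = n - (i + 1) + 1 by omega, List.range_succ,
    List.map_append, List.prod_append, List.map_singleton, List.prod_singleton,
    show n - 1 - (n - (i + 1)) = i by omega]

theorem Pel_self (t : ℕ → M) (n : ℕ) : Pel t n n = t n := by
  simp [Pel, Tseg]

theorem Pel_eq_mul (t : ℕ → M) {i n : ℕ} (h : i < n) :
    Pel t n i = t i * Pel t n (i + 1) * t i := by
  simp only [Pel, Tseg_eq_mul t h, Tseg_eq_mul_of_gt t h, mul_assoc]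

theorem Pel_mem {S : Submonoid M} {t : ℕ → M} {i n : ℕ} (hin : i ≤ n)
    (h : ∀ k, i ≤ k → k ≤ n → t k ∈ S) : Pel t n i ∈ S :=
  mul_mem (mul_mem (Tseg_mem fun k _ _ => h k (by omega) (by omega)) (h n hin le_rfl))
    (Tseg_mem fun k _ _ => h k (by omega) (by omega))

theorem commute_Pel {t : ℕ → M} {g : M} {i n : ℕ} (hin : i ≤ n)
    (h : ∀ k, i ≤ k → k ≤ n → Commute g (t k)) : Commute g (Pel t n i) :=
  Pel_mem (S := Submonoid.centralizer {g}) hin (fun k hik hkn _ hg => hg ▸ h k hik hkn) g rfl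

/-- The defining relations of the braid group of type `B_n` for `t_1, …, t_n`, the special generator
being `t_n`. -/
structure TypeBRelations (t : ℕ → M) (n : ℕ) : Prop where
  commute : ∀ i j, 1 ≤ i → i + 2 ≤ j → j ≤ n → Commute (t i) (t j)
  braidRel : ∀ i, 1 ≤ i → i + 2 ≤ n → BraidRel (t i) (t (i + 1))
  fourTermRel : ∀ i, 1 ≤ i → i + 1 = n → FourTermRel (t i) (t n)

/-- The defining relations of the affine braid group of type `C∨C_n` for `t_0, …, t_n`. -/
structure TypeCCRelations (t : ℕ → M) (n : ℕ) : Prop where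
  commute : ∀ i j, i + 2 ≤ j → j ≤ n → Commute (t i) (t j)
  braidRel : ∀ i, 1 ≤ i → i + 2 ≤ n → BraidRel (t i) (t (i + 1))
  fourTermRel_left : FourTermRel (t 0) (t 1)
  fourTermRel_right : FourTermRel (t (n - 1)) (t n)

namespace TypeBRelations

variable {t : ℕ → M} {n : ℕ}

theorem fourTermRel_Pel_succ (ht : TypeBRelations t n) {i : ℕ} (hi : 1 ≤ i) (hin : i + 1 ≤ n) :
    FourTermRel (Pel t n (i + 1)) (t i) := by
  obtain ⟨j, hj⟩ : ∃ j, i + 1 = j := ⟨_, rfl⟩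
  rw [hj] at hin ⊢
  induction hin using Nat.decreasingInduction generalizing i with
  | self => exact Pel_self t n ▸ (ht.fourTermRel i hi hj).symm
  | of_succ j hjn ih =>
    subst hj
    rw [Pel_eq_mul t hjn]
    exact (ih (by omega) rfl).conj (ht.braidRel i hi hjn).symm
      (commute_Pel hjn fun k hk hkn => ht.commute i k hi hk hkn).symm

theorem commute_succ_Pel (ht : TypeBRelations t n) {i : ℕ} (hi : 1 ≤ i) (hin : i + 1 ≤ n) :
    Commute (t (i + 1)) (Pel t n i) := by
  rw [Pel_eq_mul t hin]
  obtain rfl | hlt := hin.eq_or_lt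
  · rw [Pel_self]
    exact (ht.fourTermRel i hi rfl).commute_conj
  · rw [Pel_eq_mul t hlt]
    exact (ht.braidRel i hi hlt).commute_conj_conj
      (commute_Pel hlt fun k hk hkn => ht.commute i k hi hk hkn).symm

theorem commute_Pel_of_lt (ht : TypeBRelations t n) {i j : ℕ} (hi : 1 ≤ i) (hij : i + 1 ≤ j)
    (hjn : j ≤ n) : Commute (t j) (Pel t n i) := by
  obtain ⟨j, rfl⟩ := Nat.exists_eq_add_of_le' (Nat.one_le_of_lt hij)
  induction Nat.le_of_succ_le_succ hij using Nat.decreasingInduction with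
  | self => exact ht.commute_succ_Pel (by omega) hjn
  | of_succ i hij' ih =>
    rw [Pel_eq_mul t (by omega)]
    have hcomm : Commute (t (j + 1)) (t i) := (ht.commute i (j + 1) hi (by omega) hjn).symm
    exact (hcomm.mul_right (ih (by omega) (by omega))).mul_right hcomm

end TypeBRelations

end Monoid

section MonoidWithZero

variable {M : Type*} [MonoidWithZero M]

theorem commute_ringInverse_left {a b : M} (h : Commute a b) : Commute (Ring.inverse a) b := by
  by_cases ha : IsUnit a
  · obtain ⟨a, rfl⟩ := ha
    rw [Ring.inverse_unit]
    exact h.units_inv_left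
  · rw [Ring.inverse_non_unit a ha]
    exact Commute.zero_left b

theorem fourTermRel_ringInverse_mul {t y : M} (ht : IsUnit t) (h : Commute t (y ^ 2)) :
    FourTermRel (Ring.inverse (y * t)) t := by
  have hy : Commute (Ring.inverse y ^ 2) t := by
    rw [Ring.inverse_pow]
    exact commute_ringInverse_left h.symm
  obtain ⟨t, rfl⟩ := ht
  rw [FourTermRel, Ring.inverse_mul (.inr t.isUnit), Ring.inverse_unit]
  generalize Ring.inverse y = z at hy ⊢
  calc ↑t⁻¹ * z * t * (↑t⁻¹ * z) * t = ↑t⁻¹ * (z ^ 2 * t) := by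
        simp only [mul_assoc, Units.mul_inv_cancel_left, sq]
    _ = z ^ 2 := by rw [hy.eq, Units.inv_mul_cancel_left]
    _ = t * (↑t⁻¹ * z) * t * (↑t⁻¹ * z) := by
        simp only [mul_assoc, Units.mul_inv_cancel_left, sq]

theorem TypeBRelations.typeCCRelations_update {t : ℕ → M} {n : ℕ} (ht : TypeBRelations t n)
    (hn : 2 ≤ n) (ht1 : IsUnit (t 1)) {D : M} (hD : FourTermRel D (t 1))
    (hcomm : ∀ i, 2 ≤ i → i ≤ n → Commute D (t i)) :
    TypeCCRelations (Function.update t 0 (Ring.inverse (D * Pel t n 1))) n where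
  commute i j hij hjn := by
    rw [Function.update_of_ne (by omega : j ≠ 0)]
    obtain rfl | hi := Nat.eq_zero_or_pos i
    · rw [Function.update_self]
      exact commute_ringInverse_left
        ((hcomm j (by omega) hjn).mul_left (ht.commute_Pel_of_lt le_rfl (by omega) hjn).symm)
    · rw [Function.update_of_ne hi.ne']
      exact ht.commute i j hi hij hjn
  braidRel i hi hin := by
    rw [Function.update_of_ne (by omega), Function.update_of_ne (by omega)]
    exact ht.braidRel i hi hin
  fourTermRel_left := by
    rw [Function.update_self, Function.update_of_ne one_ne_zero, Pel_eq_mul t hn, ← mul_assoc,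
      ← mul_assoc]
    exact fourTermRel_ringInverse_mul ht1
      (hD.commute_sq (ht.fourTermRel_Pel_succ le_rfl hn) (commute_Pel hn hcomm))
  fourTermRel_right := by
    rw [Function.update_of_ne (by omega), Function.update_of_ne (by omega)]
    exact ht.fourTermRel (n - 1) (by omega) (by omega)

end MonoidWithZero

/-! ### Endomorphisms of tensor products -/

section TensorProduct

variable {R : Type*} [CommSemiring R] {A B U X : Type*} [AddCommMonoid A] [Module R A]
  [AddCommMonoid B] [Module R B] [AddCommMonoid U] [Module R U] [AddCommMonoid X] [Module R X]

/-- The algebra homomorphism `f ↦ f ⊗ id_X`, with `A ⊗ X` identified with `B` along `e`. -/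
noncomputable def rTensorConj (e : A ⊗[R] X ≃ₗ[R] B) : Module.End R A →ₐ[R] Module.End R B :=
  (e.conjAlgEquiv R).toAlgHom.comp (Module.End.rTensorAlgHom R A X)

variable (U X) in
/-- The algebra homomorphism `c ↦ c ⊗ id_X`, acting on the right-bracketed `U ⊗ (U ⊗ X)`. -/
noncomputable def onFirstTwo :
    Module.End R (U ⊗[R] U) →ₐ[R] Module.End R (U ⊗[R] (U ⊗[R] X)) :=
  rTensorConj (TensorProduct.assoc R U U X)

theorem onFirstTwo_lTensor (f : Module.End R U) :
    onFirstTwo U X (f.lTensor U) = (f.rTensor X).lTensor U :=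
  TensorProduct.ext_threefold' fun _ _ _ => rfl

theorem commute_onFirstTwo_lTensor (c : Module.End R (U ⊗[R] U)) (f : Module.End R X) :
    Commute (onFirstTwo U X c) ((f.lTensor U).lTensor U) := by
  have hf : (f.lTensor U).lTensor U
      = (TensorProduct.assoc R U U X).conjAlgEquiv R (f.lTensor (U ⊗[R] U)) :=
    TensorProduct.ext_threefold' fun _ _ _ => rfl
  have hcomm : Commute (c.rTensor X) (f.lTensor (U ⊗[R] U)) := by
    rw [Commute, SemiconjBy, Module.End.mul_eq_comp, Module.End.mul_eq_comp,
      LinearMap.rTensor_comp_lTensor, LinearMap.lTensor_comp_rTensor]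
  rw [hf]
  exact hcomm.map ((TensorProduct.assoc R U U X).conjAlgEquiv R)

theorem fourTermRel_onFirstTwo {c : Module.End R (U ⊗[R] U)} {f : Module.End R U}
    (h : FourTermRel c (f.lTensor U)) :
    FourTermRel (onFirstTwo U X c) ((f.rTensor X).lTensor U) :=
  onFirstTwo_lTensor (X := X) f ▸ h.map (onFirstTwo U X)

variable (U X) in
/-- The rebracketing `(U ⊗ (U ⊗ U)) ⊗ X ≃ U ⊗ (U ⊗ (U ⊗ X))`. -/
noncomputable def assocThree :
    (U ⊗[R] (U ⊗[R] U)) ⊗[R] X ≃ₗ[R] U ⊗[R] (U ⊗[R] (U ⊗[R] X)) :=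
  TensorProduct.assoc R U (U ⊗[R] U) X ≪≫ₗ (TensorProduct.assoc R U U X).lTensor U

theorem rTensorConj_assocThree_lTensor (c : Module.End R (U ⊗[R] U)) :
    rTensorConj (assocThree U X) (c.lTensor U) = (onFirstTwo U X c).lTensor U := by
  refine TensorProduct.ext_threefold' fun x y z => ?_
  induction z with
  | zero => simp only [TensorProduct.tmul_zero, map_zero]
  | add a b ha hb => simp only [TensorProduct.tmul_add, map_add, ha, hb]
  | tmul a b => rfl

theorem rTensorConj_assocThree_onFirstTwo (c : Module.End R (U ⊗[R] U)) :
    rTensorConj (assocThree U X) (onFirstTwo U U c) = onFirstTwo U (U ⊗[R] X) c := by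
  have pentagon : TensorProduct.assoc R U U (U ⊗[R] X) =
      (TensorProduct.assoc R (U ⊗[R] U) U X).symm ≪≫ₗ
        (TensorProduct.assoc R U U U).rTensor X ≪≫ₗ assocThree U X :=
    TensorProduct.assoc_tensor''
  refine TensorProduct.ext_threefold' fun x y z => ?_
  induction z with
  | zero => simp only [TensorProduct.tmul_zero, map_zero]
  | add a b ha hb => simp only [TensorProduct.tmul_add, map_add, ha, hb]
  | tmul a b => exact (LinearEquiv.congr_fun pentagon (c (x ⊗ₜ y) ⊗ₜ (a ⊗ₜ b))).symm

theorem braidRel_onFirstTwo {c : Module.End R (U ⊗[R] U)}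
    (h : BraidRel (onFirstTwo U U c) (c.lTensor U)) :
    BraidRel (onFirstTwo U (U ⊗[R] X) c) ((onFirstTwo U X c).lTensor U) := by
  rw [← rTensorConj_assocThree_lTensor, ← rTensorConj_assocThree_onFirstTwo]
  exact h.map (rTensorConj (assocThree U X))

end TensorProduct

/-! ### Operators on tensor powers -/

section TensorPower

variable {c : Module.End K (V ⊗[K] V)} {J : Module.End K V}

theorem isUnit_opAt (hc : IsUnit c) (i N : ℕ) : IsUnit (opAt c i N) := by
  induction i generalizing N with
  | zero =>
    match N with
    | 0 | 1 => exact isUnit_one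
    | N + 2 => exact hc.map (onFirstTwo V (TPow K V N))
  | succ i ih =>
    match N with
    | 0 => exact isUnit_one
    | N + 1 => exact (ih N).map (Module.End.lTensorAlgHom K (TPow K V N) V)

theorem isUnit_opLast (hJ : IsUnit J) (N : ℕ) : IsUnit (opLast J N) := by
  induction N with
  | zero => exact isUnit_one
  | succ N ih =>
    match N with
    | 0 => exact hJ.map (Module.End.rTensorAlgHom K V (TPow K V 0))
    | N + 1 => exact ih.map (Module.End.lTensorAlgHom K (TPow K V (N + 1)) V)

theorem commute_opAt (c : Module.End K (V ⊗[K] V)) {i j : ℕ} (hij : i + 2 ≤ j) (N : ℕ) :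
    Commute (opAt c i N) (opAt c j N) := by
  induction i generalizing j N with
  | zero =>
    obtain ⟨j, rfl⟩ := Nat.exists_eq_add_of_le' hij
    match N with
    | 0 | 1 => exact Commute.one_left _
    | N + 2 => exact commute_onFirstTwo_lTensor c (opAt c j N)
  | succ i ih =>
    obtain ⟨j, rfl⟩ := Nat.exists_eq_add_of_le' (Nat.one_le_of_lt hij)
    match N with
    | 0 => exact Commute.one_left _
    | N + 1 => exact (ih (by omega) N).map (Module.End.lTensorAlgHom K (TPow K V N) V)

theorem commute_opAt_opLast (c : Module.End K (V ⊗[K] V)) (J : Module.End K V) {i N : ℕ}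
    (hi : i + 3 ≤ N) : Commute (opAt c i N) (opLast J N) := by
  obtain ⟨N, rfl⟩ := Nat.exists_eq_add_of_le' hi
  induction i with
  | zero => exact commute_onFirstTwo_lTensor c (opLast J (N + 1))
  | succ i ih => exact (ih (by omega)).map (Module.End.lTensorAlgHom K (TPow K V (N + (i + 3))) V)

theorem braidRel_opAt (hc : BraidRel (onFirstTwo V V c) (c.lTensor V)) {i N : ℕ}
    (hi : i + 3 ≤ N) : BraidRel (opAt c i N) (opAt c (i + 1) N) := by
  obtain ⟨N, rfl⟩ := Nat.exists_eq_add_of_le' hi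
  induction i with
  | zero => exact braidRel_onFirstTwo (X := TPow K V N) hc
  | succ i ih => exact (ih (by omega)).map (Module.End.lTensorAlgHom K (TPow K V (N + (i + 3))) V)

theorem fourTermRel_opAt_opLast (hcJ : FourTermRel c (J.lTensor V)) (i : ℕ) :
    FourTermRel (opAt c i (i + 2)) (opLast J (i + 2)) := by
  induction i with
  | zero => exact fourTermRel_onFirstTwo (X := TPow K V 0) hcJ
  | succ i ih => exact ih.map (Module.End.lTensorAlgHom K (TPow K V (i + 2)) V)

theorem isUnit_Tb (hc : IsUnit c) (hJ : IsUnit J) (m n i : ℕ) : IsUnit (Tb c J m n i) := by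
  unfold Tb
  split_ifs
  exacts [isUnit_opLast hJ _, isUnit_opAt hc _ _]

theorem Tb_self (c : Module.End K (V ⊗[K] V)) (J : Module.End K V) (m n : ℕ) :
    Tb c J m n n = opLast J (m + n) := if_pos rfl

theorem Tb_of_lt (c : Module.End K (V ⊗[K] V)) (J : Module.End K V) (m : ℕ) {n i : ℕ}
    (hin : i < n) : Tb c J m n i = opAt c (m + i - 1) (m + n) := if_neg hin.ne

theorem commute_opAt_Tb (c : Module.End K (V ⊗[K] V)) (J : Module.End K V) {m n i j : ℕ}
    (hij : i + 3 ≤ m + j) (hjn : j ≤ n) : Commute (opAt c i (m + n)) (Tb c J m n j) := by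
  obtain rfl | hlt := hjn.eq_or_lt
  · exact Tb_self c J m j ▸ commute_opAt_opLast c J hij
  · exact Tb_of_lt c J m hlt ▸ commute_opAt c (by omega) (m + n)

theorem typeBRelations_Tb (hc : BraidRel (onFirstTwo V V c) (c.lTensor V))
    (hcJ : FourTermRel c (J.lTensor V)) (m n : ℕ) : TypeBRelations (Tb c J m n) n where
  commute i j hi hij hjn := by
    rw [Tb_of_lt c J m (by omega : i < n)]
    exact commute_opAt_Tb c J (by omega) hjn
  braidRel i hi hin := by
    rw [Tb_of_lt c J m (by omega : i < n), Tb_of_lt c J m (by omega : i + 1 < n),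
      show m + (i + 1) - 1 = m + i - 1 + 1 by omega]
    exact braidRel_opAt hc (by omega)
  fourTermRel i hi hin := by
    obtain ⟨k, rfl⟩ := Nat.exists_eq_add_of_le' hi
    subst hin
    rw [Tb_of_lt c J m (Nat.lt_succ_self _), Tb_self]
    exact fourTermRel_opAt_opLast hcJ (m + k)

theorem Dop_eq_jucysMurphy (c : Module.End K (V ⊗[K] V)) (m n : ℕ) :
    Dop c m n = jucysMurphy (opAt c · (m + n)) m := rfl

theorem Taff_eq_update (c : Module.End K (V ⊗[K] V)) (J : Module.End K V) (m n : ℕ) :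
    Taff c J m n
      = Function.update (Tb c J m n) 0 (Ring.inverse (Dop c m n * Pel (Tb c J m n) n 1)) :=
  funext fun i => (Function.update_apply _ _ _ i).symm

theorem isUnit_Dop_mul_Pel (hc : IsUnit c) (hJ : IsUnit J) (m : ℕ) {n : ℕ} (hn : 1 ≤ n) :
    IsUnit (Dop c m n * Pel (Tb c J m n) n 1) :=
  .mul (jucysMurphy_mem (S := IsUnit.submonoid _) fun i _ => isUnit_opAt hc i _)
    (Pel_mem (S := IsUnit.submonoid _) hn fun i _ _ => isUnit_Tb hc hJ m n i)

theorem fourTermRel_Dop_Tb_one (hc : BraidRel (onFirstTwo V V c) (c.lTensor V))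
    (J : Module.End K V) (m : ℕ) {n : ℕ} (hn : 2 ≤ n) :
    FourTermRel (Dop c m n) (Tb c J m n 1) := by
  rw [Dop_eq_jucysMurphy, Tb_of_lt c J m hn]
  exact fourTermRel_jucysMurphy (fun i j hij _ => commute_opAt c hij (m + n))
    fun i hi => braidRel_opAt hc (by omega)

theorem commute_Dop_Tb (c : Module.End K (V ⊗[K] V)) (J : Module.End K V) (m : ℕ) {n i : ℕ}
    (hi : 2 ≤ i) (hin : i ≤ n) : Commute (Dop c m n) (Tb c J m n i) := by
  rw [Dop_eq_jucysMurphy]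
  exact (commute_jucysMurphy fun _ _ => (commute_opAt_Tb c J (by omega) hin).symm).symm

end TensorPower

/-- With `T_i := c_{m+i}` (`1 ≤ i ≤ n−1`), `T_n := J` in the last factor,
`P_1 := T_1⋯T_{n−1}T_nT_{n−1}⋯T_1`, `D` the double braiding of the first `m` factors past the
`(m+1)`-st, and `T_0 := P_1⁻¹ ∘ D⁻¹`, the operators `T_0, …, T_n` satisfy the defining
relations of the affine braid group of type `C∨Cₙ`; hence they define a representation of
this affine braid group on `W = V^{⊗(m+n)}`. -/
theorem affine_braid_group_CCn_representation
    (K : Type) [Field K] (V : Type) [AddCommGroup V] [Module K V]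
    (c : Module.End K (TensorProduct K V V)) (hc : IsUnit c)
    (J : Module.End K V) (hJ : IsUnit J)
    (hbraid :
      ((TensorProduct.assoc K V V V).conj (LinearMap.rTensor V c)) * (LinearMap.lTensor V c)
          * ((TensorProduct.assoc K V V V).conj (LinearMap.rTensor V c))
        = (LinearMap.lTensor V c)
          * ((TensorProduct.assoc K V V V).conj (LinearMap.rTensor V c))
          * (LinearMap.lTensor V c))
    (hrefl : c * LinearMap.lTensor V J * c * LinearMap.lTensor V J
        = LinearMap.lTensor V J * c * LinearMap.lTensor V J * c)
    (m n : ℕ) (hm : 1 ≤ m) (hn : 2 ≤ n) :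
    IsUnit (Dop c m n * Pel (Tb c J m n) n 1) ∧
    (∀ i j : ℕ, i + 2 ≤ j → j ≤ n → Taff c J m n i * Taff c J m n j
        = Taff c J m n j * Taff c J m n i) ∧
    (∀ i : ℕ, 1 ≤ i → i + 2 ≤ n →
        Taff c J m n i * Taff c J m n (i + 1) * Taff c J m n i
          = Taff c J m n (i + 1) * Taff c J m n i * Taff c J m n (i + 1)) ∧
    (Taff c J m n 0 * Taff c J m n 1 * Taff c J m n 0 * Taff c J m n 1
        = Taff c J m n 1 * Taff c J m n 0 * Taff c J m n 1 * Taff c J m n 0) ∧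
    (Taff c J m n (n - 1) * Taff c J m n n * Taff c J m n (n - 1) * Taff c J m n n
        = Taff c J m n n * Taff c J m n (n - 1) * Taff c J m n n * Taff c J m n (n - 1)) := by
  have hB : TypeBRelations (Tb c J m n) n := typeBRelations_Tb hbraid hrefl m n
  have hCC : TypeCCRelations (Taff c J m n) n := Taff_eq_update c J m n ▸
    hB.typeCCRelations_update hn (isUnit_Tb hc hJ m n 1) (fourTermRel_Dop_Tb_one hbraid J m hn)
      fun _ => commute_Dop_Tb c J m
  exact ⟨isUnit_Dop_mul_Pel hc hJ m (by omega), hCC.commute, hCC.braidRel, hCC.fourTermRel_left,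
    hCC.fourTermRel_right⟩
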